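/- arXiv:2410.20460 — 2 statements merged into one kernel-verified Lean document; each statement's English description precedes it below -/
import Mathlib

section
/- If a and b are distinct positive integers and w is a word over the positive integers, then the composition recording the multiplicities of b in each row of the RSK insertion tableau P(wa) is dominated by the corresponding composition for P(w), which in turn is dominated by that of P(aw). Here a composition α is dominated by β if every partial sum α_1+...+α_i is at most β_1+...+β_i. -/
namespace Plactic

/-- Insert `x` into a weakly increasing row, returning the new row and the bumped entry. -/
def rowInsert (x : ℕ) : List ℕ → List ℕ × Option ℕ
  | [] => ([x], none)
  | y :: ys =>
    if x < y then (x :: ys, some y)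
    else
      let p := rowInsert x ys
      (y :: p.1, p.2)

/-- RSK insertion of `x` into a tableau given as a list of rows. -/
def tInsert (x : ℕ) : List (List ℕ) → List (List ℕ)
  | [] => [[x]]
  | r :: rs =>
    match rowInsert x r with
    | (r', none) => r' :: rs
    | (r', some y) => r' :: tInsert y rs

/-- The RSK insertion tableau of a word. -/
def P (w : List ℕ) : List (List ℕ) := w.foldl (fun t x => tInsert x t) []

/-- The `i`-th row (0-indexed) of the insertion tableau of `w`. -/
def row (w : List ℕ) (i : ℕ) : List ℕ := (P w).getD i []

/-- The `j`-th column (0-indexed) of a tableau, read top to bottom. -/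
def col (T : List (List ℕ)) (j : ℕ) : List ℕ := T.filterMap (fun r => r[j]?)

/-- An elementary Knuth transposition. -/
inductive KStep : List ℕ → List ℕ → Prop
  | k1 (x y : List ℕ) (a b c : ℕ) : a ≤ b → b < c →
      KStep (x ++ [a, c, b] ++ y) (x ++ [c, a, b] ++ y)
  | k2 (x y : List ℕ) (a b c : ℕ) : a < b → b ≤ c →
      KStep (x ++ [b, a, c] ++ y) (x ++ [b, c, a] ++ y)

/-- Knuth equivalence: the equivalence relation generated by Knuth transpositions. -/
def KEquiv : List ℕ → List ℕ → Prop := Relation.EqvGen KStep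

/-- The centralizer of `u` in the plactic monoid. -/
def Cent (u : List ℕ) : Set (List ℕ) := {w | KEquiv (u ++ w) (w ++ u)}

end Plactic

/-!
For every letter `v` let `T v` be the shape of the part of the insertion tableau with entries
smaller than `v`, so that the multiplicity of `b` in row `i` is `T (b + 1) i - T b i`. Inserting `a`
adds one box to each of the shapes `T v` with `v > a`. As `v` grows, the row of this box moves down
if `a` is inserted by rows, as in `P(wa)`, and moves up if `a` is inserted by columns, as in
`P(aw)`; comparing the rows for `v = b` and `v = b + 1` gives the two dominance relations.

That `P(aw)` arises from `P(w)` by a column insertion follows by induction on the last letter of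
`w`, because the row insertion of a letter `x` commutes with the column insertion of `a`: level by
level the two new boxes either do not interfere, or both insertions want the same box of `T v`, and
then the one performed second gets the box at the end of the next row.
-/

namespace Plactic

/-- `gtPattern t v` is the shape of the part of the tableau `t` with entries smaller than `v`; these
shapes form the Gelfand–Tsetlin pattern of `t`. -/
def gtPattern (t : List (List ℕ)) (v i : ℕ) : ℕ := (t.getD i []).countP (· < v)

/-- Consecutive shapes `T v ⊆ T (v + 1)` differ by a horizontal strip, as they do in the
Gelfand–Tsetlin pattern of a semistandard tableau. -/
structure Interlacing (T : ℕ → ℕ → ℕ) : Prop where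
  le_succ (v i : ℕ) : T v i ≤ T (v + 1) i
  succ_le (v i : ℕ) : T (v + 1) (i + 1) ≤ T v i

/-- The effect of inserting the letter `a` on a chain of shapes `T`: for every `v > a` the shape
`T v` gets a new box, in row `q v`. The values of `q` up to `a` are irrelevant. -/
def addBoxes (T : ℕ → ℕ → ℕ) (a : ℕ) (q : ℕ → ℕ) (v i : ℕ) : ℕ :=
  T v i + if a < v ∧ q v = i then 1 else 0

/-- The row of the box that row insertion of `x` adds to the shape `T v`, for `v > x`; it is `0` for
`v ≤ x`. -/
def bumpPath (T : ℕ → ℕ → ℕ) (x : ℕ) : ℕ → ℕ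
  | 0 => 0
  | v + 1 =>
    -- The bumping route leaves its row for the next one at the letter `v` if the row contains it.
    bumpPath T x v + if x < v ∧ T v (bumpPath T x v) < T (v + 1) (bumpPath T x v) then 1 else 0

/-- Row insertion of `x`, as an operation on Gelfand–Tsetlin patterns. -/
def rowIns (T : ℕ → ℕ → ℕ) (x : ℕ) : ℕ → ℕ → ℕ := addBoxes T x (bumpPath T x)

/-- For `v > a`, the box that column insertion of `a` adds to the shape `T v` is in row `p v`. From
`v` to `v + 1` the box moves up, past every row `i` such that row `i + 1` of `T (v + 1)` already has
the maximal length `T v i`. At `v = a` it starts below all rows, whatever the value of `p a`. -/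
structure IsColumnPath (T : ℕ → ℕ → ℕ) (a : ℕ) (p : ℕ → ℕ) : Prop where
  succ_le {v : ℕ} : a < v → p (v + 1) ≤ p v
  full {v i : ℕ} : a ≤ v → p (v + 1) ≤ i → (a < v → i < p v) → T v i ≤ T (v + 1) (i + 1)

section Interlacing

variable {T : ℕ → ℕ → ℕ} {x v : ℕ}

lemma rowIns_apply (T : ℕ → ℕ → ℕ) (x v i : ℕ) :
    rowIns T x v i = T v i + if x < v ∧ bumpPath T x v = i then 1 else 0 := rfl

lemma bumpPath_eq_zero (h : v ≤ x + 1) : bumpPath T x v = 0 := by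
  induction v with
  | zero => rfl
  | succ v ih => simp [bumpPath, ih (by omega), show ¬x < v by omega]

lemma bumpPath_succ_of_lt (hx : x < v) (h : T v (bumpPath T x v) < T (v + 1) (bumpPath T x v)) :
    bumpPath T x (v + 1) = bumpPath T x v + 1 := by
  simp [bumpPath, hx, h]

lemma bumpPath_succ_of_ge (h : T (v + 1) (bumpPath T x v) ≤ T v (bumpPath T x v)) :
    bumpPath T x (v + 1) = bumpPath T x v := by
  simp [bumpPath, h.not_gt]

lemma bumpPath_succ_eq_succ_cases {i : ℕ} (h : bumpPath T x (v + 1) = i + 1) :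
    x < v ∧ (bumpPath T x v = i ∧ T v i < T (v + 1) i ∨
      bumpPath T x v = i + 1 ∧ T (v + 1) (i + 1) ≤ T v (i + 1)) := by
  have hx : x < v := by
    by_contra hx
    rw [bumpPath_eq_zero (by omega)] at h
    omega
  refine ⟨hx, ?_⟩
  rcases lt_or_ge (T v (bumpPath T x v)) (T (v + 1) (bumpPath T x v)) with hlt | hge
  · rw [bumpPath_succ_of_lt hx hlt, add_left_inj] at h
    exact .inl ⟨h, h ▸ hlt⟩
  · rw [bumpPath_succ_of_ge hge] at h
    exact .inr ⟨h, h ▸ hge⟩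

lemma Interlacing.row_anti (hT : Interlacing T) (v i : ℕ) : T v (i + 1) ≤ T v i :=
  (hT.le_succ v (i + 1)).trans (hT.succ_le v i)

lemma Interlacing.lt_of_bumpPath_eq_succ (hT : Interlacing T) {i : ℕ}
    (h : bumpPath T x v = i + 1) : T v (i + 1) < T v i := by
  induction v with
  | zero => simp [bumpPath] at h
  | succ v ih =>
    obtain ⟨-, ⟨-, hlt⟩ | ⟨hv, hle⟩⟩ := bumpPath_succ_eq_succ_cases h
    · exact (hT.succ_le v i).trans_lt hlt
    · exact hle.trans_lt ((ih hv).trans_le (hT.le_succ v i))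

lemma Interlacing.rowIns (hT : Interlacing T) (x : ℕ) : Interlacing (rowIns T x) where
  le_succ v i := by
    have hle := hT.le_succ v i
    have hleave : bumpPath T x v = i → T (v + 1) i ≤ T v i → bumpPath T x (v + 1) = i := by
      rintro rfl hge
      exact bumpPath_succ_of_ge hge
    grind [rowIns_apply]
  succ_le v i := by
    have hle := hT.succ_le v i
    by_cases h : bumpPath T x (v + 1) = i + 1
    · obtain ⟨hx, ⟨hv, -⟩ | ⟨hv, hge⟩⟩ := bumpPath_succ_eq_succ_cases h
      · simp only [rowIns_apply, h, hv, hx, hx.trans (Nat.lt_succ_self v), and_self, if_true]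
        omega
      · have hlt := hT.lt_of_bumpPath_eq_succ hv
        grind [rowIns_apply]
    · simp only [rowIns_apply, h, and_false, if_false]
      omega

end Interlacing

section Commute

variable {T : ℕ → ℕ → ℕ} {a x v : ℕ} {p : ℕ → ℕ}

/-- Row insertion of `x` and column insertion of `a` along `p` want the same box of `T v`. The next
row of `T v` is just as long, and if `a` is inserted first, then the box of `x` goes there. -/
structure PathsSplit (T : ℕ → ℕ → ℕ) (a : ℕ) (p : ℕ → ℕ) (x v : ℕ) : Prop where
  col_lt : a < v
  row_lt : x < v
  col_eq : p v = bumpPath T x v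
  succ_eq : bumpPath (addBoxes T a p) x v = bumpPath T x v + 1
  le_succ : T v (bumpPath T x v) ≤ T v (bumpPath T x v + 1)

lemma IsColumnPath.addBoxes_lt_addBoxes_succ (hp : IsColumnPath T a p)
    (hT' : Interlacing (addBoxes T a p)) (hx : x < v)
    (h : bumpPath (addBoxes T a p) x v = bumpPath T x v)
    (hlt : T v (bumpPath T x v) < T (v + 1) (bumpPath T x v)) :
    addBoxes T a p v (bumpPath T x v) < addBoxes T a p (v + 1) (bumpPath T x v) := by
  generalize bumpPath T x v = j at h hlt ⊢
  by_contra hle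
  obtain ⟨ha, hpv, hpne, hone⟩ :
      a < v ∧ p v = j ∧ p (v + 1) ≠ j ∧ T (v + 1) j = T v j + 1 := by
    grind [addBoxes]
  have hp_le := hp.succ_le ha
  obtain ⟨i, rfl⟩ : ∃ i, j = i + 1 := Nat.exists_eq_add_one.2 (by omega)
  have hfull : T v i ≤ T (v + 1) (i + 1) := hp.full ha.le (by omega) (by omega)
  -- After both insertions, row `i + 1` would be longer than row `i`.
  have hanti := (hT'.rowIns x).row_anti v i
  grind [rowIns_apply, addBoxes]

lemma IsColumnPath.pathsSplit_succ (hp : IsColumnPath T a p) (hT : Interlacing T)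
    (hT' : Interlacing (addBoxes T a p))
    (h : bumpPath (addBoxes T a p) x v = bumpPath T x v)
    (hne : bumpPath (addBoxes T a p) x (v + 1) ≠ bumpPath T x (v + 1)) :
    PathsSplit T a p x (v + 1) ∧ bumpPath T x (v + 1) = bumpPath T x v ∧
      (a < v → bumpPath T x v < p v) := by
  have hx : x < v := by
    by_contra hx
    exact hne (by rw [bumpPath_eq_zero (by omega), bumpPath_eq_zero (by omega)])
  have hge : T (v + 1) (bumpPath T x v) ≤ T v (bumpPath T x v) := by
    by_contra! hlt
    have hlt' := hp.addBoxes_lt_addBoxes_succ hT' hx h hlt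
    rw [← h] at hlt'
    exact hne (by rw [bumpPath_succ_of_lt hx hlt', h, bumpPath_succ_of_lt hx hlt])
  have heq := bumpPath_succ_of_ge hge
  have hlt' : addBoxes T a p v (bumpPath T x v) < addBoxes T a p (v + 1) (bumpPath T x v) := by
    by_contra! hge'
    rw [← h] at hge'
    exact hne (by rw [bumpPath_succ_of_ge hge', h, heq])
  obtain ⟨ha, hpv, hpne⟩ : a ≤ v ∧ p (v + 1) = bumpPath T x v ∧
      (a < v → p v ≠ bumpPath T x v) := by
    grind [addBoxes]
  have hlt : a < v → bumpPath T x v < p v := fun ha =>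
    (hpv.ge.trans (hp.succ_le ha)).lt_of_ne (hpne ha).symm
  have hfull := hp.full ha hpv.le hlt
  have hle := hT.le_succ v (bumpPath T x v)
  rw [← h] at hlt'
  exact ⟨⟨by omega, by omega, by rw [hpv, heq], by rw [bumpPath_succ_of_lt hx hlt', h, heq],
    by rw [heq]; omega⟩, heq, hlt⟩

lemma PathsSplit.bumpPath_addBoxes_succ (h : PathsSplit T a p x v) (hp : IsColumnPath T a p)
    (hT : Interlacing T) : bumpPath (addBoxes T a p) x (v + 1) = bumpPath T x v + 1 := by
  rw [← h.succ_eq]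
  refine bumpPath_succ_of_ge ?_
  have hle := h.le_succ
  have hT_le := hT.succ_le v (bumpPath T x v)
  have hp_le := hp.succ_le h.col_lt
  grind [addBoxes, h.succ_eq, h.col_eq]

lemma PathsSplit.bumpPath_succ (h : PathsSplit T a p x v) (hp : IsColumnPath T a p)
    (hT : Interlacing T) (hT' : Interlacing (addBoxes T a p)) :
    bumpPath T x (v + 1) = bumpPath T x v + 1 ∨
      bumpPath T x (v + 1) = bumpPath T x v ∧ PathsSplit T a p x (v + 1) := by
  have hsucc := h.bumpPath_addBoxes_succ hp hT
  obtain ⟨ha, hx, hpv, -, hle⟩ := h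
  rcases lt_or_ge (T v (bumpPath T x v)) (T (v + 1) (bumpPath T x v)) with hlt | hge
  · exact .inl (bumpPath_succ_of_lt hx hlt)
  have heq := bumpPath_succ_of_ge hge
  have hp_le := hp.succ_le ha
  have hpj : p (v + 1) = bumpPath T x v := by
    generalize bumpPath T x v = j at hpv hge ⊢
    by_contra hpj
    obtain ⟨i, rfl⟩ : ∃ i, j = i + 1 := Nat.exists_eq_add_one.2 (by omega)
    have hfull : T v i ≤ T (v + 1) (i + 1) := hp.full ha.le (by omega) (by omega)
    have hanti := hT'.row_anti v i
    grind [addBoxes]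
  have hmono := hT.le_succ v (bumpPath T x v + 1)
  exact .inr ⟨heq, by omega, by omega, by rw [hpj, heq], by rw [hsucc, heq], by rw [heq]; omega⟩

lemma IsColumnPath.eq_or_pathsSplit (hp : IsColumnPath T a p) (hT : Interlacing T)
    (hT' : Interlacing (addBoxes T a p)) (x v : ℕ) :
    bumpPath (addBoxes T a p) x v = bumpPath T x v ∨ PathsSplit T a p x v := by
  induction v with
  | zero => exact .inl rfl
  | succ v ih =>
    rcases ih with h | h
    · exact or_iff_not_imp_left.2 fun hne => (hp.pathsSplit_succ hT hT' h hne).1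
    · rcases h.bumpPath_succ hp hT hT' with heq | ⟨-, hsplit⟩
      · exact .inl ((h.bumpPath_addBoxes_succ hp hT).trans heq.symm)
      · exact .inr hsplit

/-- The path along which `a` is inserted by columns once `x` has been inserted by rows, where
`p` was its path before. -/
def pathAfterRowIns (T : ℕ → ℕ → ℕ) (a : ℕ) (p : ℕ → ℕ) (x v : ℕ) : ℕ :=
  if bumpPath (addBoxes T a p) x v = bumpPath T x v then p v else bumpPath (addBoxes T a p) x v

lemma pathAfterRowIns_of_eq (h : bumpPath (addBoxes T a p) x v = bumpPath T x v) :
    pathAfterRowIns T a p x v = p v := if_pos h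

lemma PathsSplit.pathAfterRowIns_eq (h : PathsSplit T a p x v) :
    pathAfterRowIns T a p x v = bumpPath T x v + 1 := by
  have hne : bumpPath (addBoxes T a p) x v ≠ bumpPath T x v := by
    rw [h.succ_eq]
    omega
  rw [pathAfterRowIns, if_neg hne, h.succ_eq]

lemma IsColumnPath.rowIns_addBoxes (hp : IsColumnPath T a p) (hT : Interlacing T)
    (hT' : Interlacing (addBoxes T a p)) (x : ℕ) :
    rowIns (addBoxes T a p) x = addBoxes (rowIns T x) a (pathAfterRowIns T a p x) := by
  ext v i
  rcases hp.eq_or_pathsSplit hT hT' x v with h | h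
  · simp only [rowIns_apply, addBoxes, pathAfterRowIns_of_eq h, h, Nat.add_right_comm]
  · simp only [rowIns_apply, addBoxes, h.pathAfterRowIns_eq, h.succ_eq, h.col_eq, h.col_lt,
      h.row_lt, true_and]

lemma IsColumnPath.bumpPath_succ_eq_add_one (hp : IsColumnPath T a p) (hT : Interlacing T)
    (h : bumpPath (addBoxes T a p) x v = bumpPath T x v)
    (h' : bumpPath (addBoxes T a p) x (v + 1) = bumpPath T x (v + 1)) (hx : x < v) (ha : a ≤ v)
    (hle : p (v + 1) ≤ bumpPath T x v) (hlt : a < v → bumpPath T x v < p v) :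
    bumpPath T x (v + 1) = bumpPath T x v + 1 := by
  by_contra hne
  have hge : T (v + 1) (bumpPath T x v) ≤ T v (bumpPath T x v) := by
    by_contra! hlt
    exact hne (bumpPath_succ_of_lt hx hlt)
  have hge' : addBoxes T a p (v + 1) (bumpPath T x v) ≤ addBoxes T a p v (bumpPath T x v) := by
    by_contra! hlt
    rw [← h] at hlt
    exact hne (by rw [← h', bumpPath_succ_of_lt hx hlt, h])
  generalize hj : bumpPath T x v = j at hle hlt hge hge'
  have hmono := hT.le_succ v j
  have hpj : p (v + 1) ≠ j := by grind [addBoxes]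
  obtain ⟨i, rfl⟩ : ∃ i, j = i + 1 := Nat.exists_eq_add_one.2 (by omega)
  have hfull : T v i ≤ T (v + 1) (i + 1) := hp.full ha (by omega) (by omega)
  exact (hfull.trans hge).not_gt (hT.lt_of_bumpPath_eq_succ hj)

lemma IsColumnPath.pathAfterRowIns_succ_le (hp : IsColumnPath T a p) (hT : Interlacing T)
    (hT' : Interlacing (addBoxes T a p)) (x : ℕ) (ha : a < v) :
    pathAfterRowIns T a p x (v + 1) ≤ pathAfterRowIns T a p x v := by
  have hp_le := hp.succ_le ha
  rcases hp.eq_or_pathsSplit hT hT' x v with h | h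
  · rw [pathAfterRowIns_of_eq h]
    by_cases h' : bumpPath (addBoxes T a p) x (v + 1) = bumpPath T x (v + 1)
    · rwa [pathAfterRowIns_of_eq h']
    · obtain ⟨hsplit, heq, hlt⟩ := hp.pathsSplit_succ hT hT' h h'
      rw [hsplit.pathAfterRowIns_eq, heq]
      exact hlt ha
  · rw [h.pathAfterRowIns_eq]
    have hpv := h.col_eq
    rcases h.bumpPath_succ hp hT hT' with heq | ⟨heq, hsplit⟩
    · rw [pathAfterRowIns_of_eq ((h.bumpPath_addBoxes_succ hp hT).trans heq.symm)]
      omega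
    · rw [hsplit.pathAfterRowIns_eq, heq]

lemma IsColumnPath.rowIns_le_rowIns_succ_of_eq (hp : IsColumnPath T a p) (hT : Interlacing T)
    (hT' : Interlacing (addBoxes T a p)) {i : ℕ} (ha : a ≤ v)
    (h : bumpPath (addBoxes T a p) x v = bumpPath T x v)
    (hle : pathAfterRowIns T a p x (v + 1) ≤ i) (hlt : a < v → i < p v) :
    rowIns T x v i ≤ rowIns T x (v + 1) (i + 1) := by
  by_cases h' : bumpPath (addBoxes T a p) x (v + 1) = bumpPath T x (v + 1)
  · rw [pathAfterRowIns_of_eq h'] at hle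
    have hfull := hp.full ha hle hlt
    have hbump : x < v → bumpPath T x v = i → bumpPath T x (v + 1) = i + 1 := by
      rintro hx rfl
      exact hp.bumpPath_succ_eq_add_one hT h h' hx ha hle hlt
    grind [rowIns_apply]
  · obtain ⟨hsplit, heq, -⟩ := hp.pathsSplit_succ hT hT' h h'
    rw [hsplit.pathAfterRowIns_eq, heq] at hle
    have hfull := hp.full ha (by rw [hsplit.col_eq, heq]; omega) hlt
    simp only [rowIns_apply, show bumpPath T x v ≠ i by omega, and_false, if_false]
    omega

lemma IsColumnPath.rowIns_le_rowIns_succ_of_pathsSplit (hp : IsColumnPath T a p)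
    (hT : Interlacing T) (hT' : Interlacing (addBoxes T a p)) {i : ℕ} (h : PathsSplit T a p x v)
    (hle : pathAfterRowIns T a p x (v + 1) ≤ i) (hlt : i ≤ bumpPath T x v) :
    rowIns T x v i ≤ rowIns T x (v + 1) (i + 1) := by
  have ha := h.col_lt
  have hx := h.row_lt
  have hpv := h.col_eq
  rcases h.bumpPath_succ hp hT hT' with heq | ⟨heq, hsplit⟩
  · rw [pathAfterRowIns_of_eq ((h.bumpPath_addBoxes_succ hp hT).trans heq.symm)] at hle
    simp only [rowIns_apply, heq]
    rcases hlt.lt_or_eq with hi | rfl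
    · have hfull := hp.full ha.le hle (by omega)
      grind
    · have hmono := hT.le_succ v (bumpPath T x v + 1)
      have hle_succ := h.le_succ
      grind
  · rw [hsplit.pathAfterRowIns_eq, heq] at hle
    omega

lemma IsColumnPath.rowIns (hp : IsColumnPath T a p) (hT : Interlacing T)
    (hT' : Interlacing (addBoxes T a p)) (x : ℕ) :
    IsColumnPath (rowIns T x) a (pathAfterRowIns T a p x) where
  succ_le ha := hp.pathAfterRowIns_succ_le hT hT' x ha
  full {v i} ha hle hlt := by
    rcases hp.eq_or_pathsSplit hT hT' x v with h | h
    · rw [pathAfterRowIns_of_eq h] at hlt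
      exact hp.rowIns_le_rowIns_succ_of_eq hT hT' ha h hle hlt
    · rw [h.pathAfterRowIns_eq] at hlt
      exact hp.rowIns_le_rowIns_succ_of_pathsSplit hT hT' h hle (Nat.lt_succ_iff.1 (hlt h.col_lt))

end Commute

section Tableau

variable {x y v : ℕ} {r r' : List ℕ} {t : List (List ℕ)}

lemma countP_lt_succ (r : List ℕ) (v : ℕ) :
    r.countP (· < v + 1) = r.countP (· < v) + r.count v := by
  induction r with
  | nil => rfl
  | cons z r ih =>
    simp only [List.countP_cons, List.count_cons, ih, decide_eq_true_eq, beq_iff_eq]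
    grind

lemma gtPattern_succ (t : List (List ℕ)) (v i : ℕ) :
    gtPattern t (v + 1) i = gtPattern t v i + (t.getD i []).count v :=
  countP_lt_succ _ _

lemma gtPattern_lt_succ_iff {i : ℕ} :
    gtPattern t v i < gtPattern t (v + 1) i ↔ v ∈ t.getD i [] := by
  rw [gtPattern_succ, Nat.lt_add_right_iff_pos, List.count_pos_iff]

lemma gtPattern_cons_zero (r : List ℕ) (t : List (List ℕ)) (v : ℕ) :
    gtPattern (r :: t) v 0 = r.countP (· < v) := rfl

lemma gtPattern_cons_succ (r : List ℕ) (t : List (List ℕ)) (v i : ℕ) :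
    gtPattern (r :: t) v (i + 1) = gtPattern t v i := rfl

lemma gtPattern_nil (v i : ℕ) : gtPattern [] v i = 0 := rfl

lemma eq_append_of_rowInsert_eq_none (h : rowInsert x r = (r', none)) :
    r' = r ++ [x] ∧ ∀ z ∈ r, z ≤ x := by
  induction r generalizing r' with
  | nil => simp_all [rowInsert]
  | cons z r ih => grind [rowInsert]

lemma exists_append_cons_of_rowInsert_eq_some (h : rowInsert x r = (r', some y)) :
    ∃ l₁ l₂, r = l₁ ++ y :: l₂ ∧ r' = l₁ ++ x :: l₂ ∧ (∀ z ∈ l₁, z ≤ x) ∧ x < y := by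
  induction r generalizing r' with
  | nil => simp [rowInsert] at h
  | cons z r ih =>
    by_cases hxz : x < z
    · simp only [rowInsert, if_pos hxz, Prod.mk.injEq, Option.some.injEq] at h
      obtain ⟨rfl, rfl⟩ := h
      exact ⟨[], r, rfl, rfl, by simp, hxz⟩
    · simp only [rowInsert, if_neg hxz, Prod.mk.injEq] at h
      obtain ⟨rfl, hy⟩ := h
      obtain ⟨l₁, l₂, rfl, hr', hl₁, hxy⟩ := ih (Prod.ext rfl hy)
      exact ⟨z :: l₁, l₂, rfl, congrArg (z :: ·) hr', by grind, hxy⟩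

lemma pairwise_tInsert (ht : ∀ r ∈ t, r.Pairwise (· ≤ ·)) (x : ℕ) :
    ∀ r ∈ tInsert x t, r.Pairwise (· ≤ ·) := by
  induction t generalizing x with
  | nil => simp [tInsert]
  | cons r t ih =>
    rw [List.forall_mem_cons] at ht
    obtain ⟨hr, ht⟩ := ht
    rcases h : rowInsert x r with ⟨r', _ | y⟩
    · obtain ⟨rfl, hle⟩ := eq_append_of_rowInsert_eq_none h
      simpa only [tInsert, h, List.forall_mem_cons, List.pairwise_append] using
        ⟨⟨hr, List.pairwise_singleton _ _, by simpa using hle⟩, ht⟩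
    · obtain ⟨l₁, l₂, rfl, rfl, hle, hlt⟩ := exists_append_cons_of_rowInsert_eq_some h
      simp only [tInsert, h, List.forall_mem_cons]
      refine ⟨?_, ih ht y⟩
      simp only [List.pairwise_append, List.pairwise_cons, List.mem_cons] at hr ⊢
      grind

lemma bumpPath_cons_of_forall_le (hr : ∀ z ∈ r, z ≤ x) (t : List (List ℕ)) (v : ℕ) :
    bumpPath (gtPattern (r :: t)) x v = 0 := by
  induction v with
  | zero => rfl
  | succ v ih =>
    have hstay : ¬(x < v ∧ v ∈ r) := fun h => (hr v h.2).not_gt h.1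
    simp [bumpPath, ih, gtPattern_lt_succ_iff, hstay]

lemma bumpPath_cons_of_mem (hxy : x < y) (hy : y ∈ r) (hr : ∀ z ∈ r, x < z → y ≤ z)
    (t : List (List ℕ)) (v : ℕ) :
    bumpPath (gtPattern (r :: t)) x v =
      if y < v then bumpPath (gtPattern t) y v + 1 else 0 := by
  induction v with
  | zero => rfl
  | succ v ih =>
    simp only [bumpPath, ih, gtPattern_lt_succ_iff]
    rcases lt_trichotomy v y with hv | rfl | hv
    · have hstay : ¬(x < v ∧ v ∈ r) := fun h => (hr v h.2 h.1).not_gt hv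
      simp [hv.not_gt, hv, hstay]
    · simp [hxy, hy, bumpPath_eq_zero]
    · simp [hv, hxy.trans hv, Nat.lt_succ_of_lt hv, Nat.add_right_comm]

lemma bumpPath_nil (x v : ℕ) : bumpPath (gtPattern []) x v = 0 := by
  induction v with
  | zero => rfl
  | succ v ih => simp [bumpPath, ih, gtPattern_nil]

theorem gtPattern_tInsert (ht : ∀ r ∈ t, r.Pairwise (· ≤ ·)) (x : ℕ) :
    gtPattern (tInsert x t) = rowIns (gtPattern t) x := by
  induction t generalizing x with
  | nil =>
    ext v (_ | i) <;>
      simp [tInsert, rowIns_apply, bumpPath_nil, gtPattern_cons_zero, gtPattern_cons_succ,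
        gtPattern_nil, List.countP_singleton]
  | cons r t ih =>
    rw [List.forall_mem_cons] at ht
    obtain ⟨hr, ht⟩ := ht
    rcases h : rowInsert x r with ⟨r', _ | y⟩
    · obtain ⟨rfl, hle⟩ := eq_append_of_rowInsert_eq_none h
      ext v (_ | i) <;>
        simp [tInsert, h, rowIns_apply, bumpPath_cons_of_forall_le hle, gtPattern_cons_zero,
          gtPattern_cons_succ, List.countP_singleton]
    · obtain ⟨l₁, l₂, rfl, rfl, hle, hlt⟩ := exists_append_cons_of_rowInsert_eq_some h
      have hgap : ∀ z ∈ l₁ ++ y :: l₂, x < z → y ≤ z := by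
        simp only [List.pairwise_append, List.pairwise_cons] at hr
        grind
      ext v (_ | i)
      · simp only [tInsert, h, rowIns_apply, bumpPath_cons_of_mem hlt (by simp) hgap,
          gtPattern_cons_zero, List.countP_append, List.countP_cons, decide_eq_true_eq]
        grind
      · simp only [tInsert, h, ih ht y, rowIns_apply, bumpPath_cons_of_mem hlt (by simp) hgap,
          gtPattern_cons_succ]
        grind

end Tableau

section Words

lemma P_append_singleton (w : List ℕ) (a : ℕ) : P (w ++ [a]) = tInsert a (P w) := by
  simp [P]

lemma pairwise_P (w : List ℕ) : ∀ r ∈ P w, r.Pairwise (· ≤ ·) := by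
  induction w using List.reverseRecOn with
  | nil => simp [P]
  | append_singleton w a ih =>
    rw [P_append_singleton]
    exact pairwise_tInsert ih a

theorem gtPattern_P_append_singleton (w : List ℕ) (a : ℕ) :
    gtPattern (P (w ++ [a])) = rowIns (gtPattern (P w)) a := by
  rw [P_append_singleton, gtPattern_tInsert (pairwise_P w)]

lemma interlacing_gtPattern_P (w : List ℕ) : Interlacing (gtPattern (P w)) := by
  induction w using List.reverseRecOn with
  | nil => exact ⟨fun _ _ => le_rfl, fun _ _ => le_rfl⟩
  | append_singleton w a ih =>
    rw [gtPattern_P_append_singleton]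
    exact ih.rowIns a

theorem exists_isColumnPath_gtPattern_P_cons (a : ℕ) (w : List ℕ) :
    ∃ p, IsColumnPath (gtPattern (P w)) a p ∧
      gtPattern (P (a :: w)) = addBoxes (gtPattern (P w)) a p := by
  induction w using List.reverseRecOn with
  | nil =>
    refine ⟨0, ⟨fun _ => le_rfl, fun _ _ _ => le_rfl⟩, ?_⟩
    ext v (_ | i) <;>
      simp [P, tInsert, addBoxes, gtPattern_cons_zero, gtPattern_cons_succ, gtPattern_nil,
        List.countP_cons]
  | append_singleton w x ih =>
    obtain ⟨p, hp, hPa⟩ := ih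
    have hT := interlacing_gtPattern_P w
    have hT' := interlacing_gtPattern_P (a :: w)
    rw [hPa] at hT'
    refine ⟨pathAfterRowIns (gtPattern (P w)) a p x, ?_, ?_⟩
    · rw [gtPattern_P_append_singleton]
      exact hp.rowIns hT hT' x
    · rw [← List.cons_append, gtPattern_P_append_singleton, gtPattern_P_append_singleton, hPa,
        hp.rowIns_addBoxes hT hT']

end Words

section Dominance

open Finset

lemma sum_addBoxes (T : ℕ → ℕ → ℕ) (a : ℕ) (q : ℕ → ℕ) (v k : ℕ) :
    ∑ i ∈ range k, addBoxes T a q v i =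
      ∑ i ∈ range k, T v i + if a < v ∧ q v < k then 1 else 0 := by
  simp [addBoxes, sum_add_distrib, ite_and]

lemma sum_gtPattern_succ (t : List (List ℕ)) (b k : ℕ) :
    ∑ i ∈ range k, gtPattern t (b + 1) i =
      ∑ i ∈ range k, gtPattern t b i + ∑ i ∈ range k, (t.getD i []).count b := by
  simp only [gtPattern_succ, sum_add_distrib]

lemma sum_count_row_append_le {a b : ℕ} (hab : a ≠ b) (w : List ℕ) (k : ℕ) :
    ∑ i ∈ range k, (row (w ++ [a]) i).count b ≤ ∑ i ∈ range k, (row w i).count b := by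
  have hpath : bumpPath (gtPattern (P w)) a b ≤ bumpPath (gtPattern (P w)) a (b + 1) :=
    Nat.le_add_right _ _
  have h := sum_gtPattern_succ (P w) b k
  have h' := sum_gtPattern_succ (P (w ++ [a])) b k
  simp only [gtPattern_P_append_singleton, rowIns, sum_addBoxes] at h'
  simp only [row]
  split_ifs at h' <;> omega

lemma sum_count_row_le_cons (a b : ℕ) (w : List ℕ) (k : ℕ) :
    ∑ i ∈ range k, (row w i).count b ≤ ∑ i ∈ range k, (row (a :: w) i).count b := by
  obtain ⟨p, hp, hPa⟩ := exists_isColumnPath_gtPattern_P_cons a w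
  have hpath : a < b → p (b + 1) ≤ p b := hp.succ_le
  have h := sum_gtPattern_succ (P w) b k
  have h' := sum_gtPattern_succ (P (a :: w)) b k
  simp only [hPa, sum_addBoxes] at h'
  simp only [row]
  split_ifs at h' <;> omega

end Dominance

end Plactic

open Plactic in
theorem stmt_0 (a b : ℕ) (ha : 0 < a) (hb : 0 < b) (hab : a ≠ b)
    (w : List ℕ) (hw : ∀ x ∈ w, 0 < x) (k : ℕ) :
    (∑ i ∈ Finset.range k, (row (w ++ [a]) i).count b) ≤
      (∑ i ∈ Finset.range k, (row w i).count b) ∧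
    (∑ i ∈ Finset.range k, (row w i).count b) ≤
      (∑ i ∈ Finset.range k, (row (a :: w) i).count b) :=
  ⟨sum_count_row_append_le hab w k, sum_count_row_le_cons a b w k⟩
end

section
/- If w is in the centralizer C(u) = {w : uw is Knuth-equivalent to wu} and b is a positive integer not appearing in u, then α_b(P(wu)) = α_b(P(w)) = α_b(P(uw)), where α_b records the row multiplicities of b. -/
/-!
Right multiplication by letters other than `b` only lets the `b`s sink: an inserted letter can bump
a `b` to a lower row, but never lifts one, so the number of `b`s in the top `k` rows does not
increase from `P w` to `P (w ++ u)`. Left multiplication does the opposite: `x :: w` is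
Knuth-equivalent to the reading word of `P w` with `x` put in front, and inserting this word row by
row, from the bottom row up, either stabilizes or hands a single entry from each row to the one
above. Hence the number of `b`s in the top `k` rows does not decrease from `P w` to `P (u ++ w)`.
For `w` in the centralizer of `u` the two tableaux `P (w ++ u)` and `P (u ++ w)` agree, so all these
numbers coincide.
-/

namespace Plactic

variable {a b c t x y z : ℕ} {r s s' u v w : List ℕ}

section KnuthEquivalence

theorem KEquiv.refl (u : List ℕ) : KEquiv u u := Relation.EqvGen.refl u

theorem KEquiv.symm (h : KEquiv u v) : KEquiv v u := Relation.EqvGen.symm _ _ h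

theorem KEquiv.trans (h : KEquiv u v) (h' : KEquiv v w) : KEquiv u w :=
  Relation.EqvGen.trans _ _ _ h h'

theorem KStep.kEquiv (h : KStep u v) : KEquiv u v := Relation.EqvGen.rel _ _ h

theorem KStep.append_left (p : List ℕ) (h : KStep u v) : KStep (p ++ u) (p ++ v) := by
  cases h with
  | k1 x y a b c hab hbc => simpa only [List.append_assoc] using KStep.k1 (p ++ x) y a b c hab hbc
  | k2 x y a b c hab hbc => simpa only [List.append_assoc] using KStep.k2 (p ++ x) y a b c hab hbc

theorem KStep.append_right (q : List ℕ) (h : KStep u v) : KStep (u ++ q) (v ++ q) := by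
  cases h with
  | k1 x y a b c hab hbc => simpa only [List.append_assoc] using KStep.k1 x (y ++ q) a b c hab hbc
  | k2 x y a b c hab hbc => simpa only [List.append_assoc] using KStep.k2 x (y ++ q) a b c hab hbc

theorem KEquiv.append_left (p : List ℕ) (h : KEquiv u v) : KEquiv (p ++ u) (p ++ v) := by
  induction h with
  | rel _ _ h => exact (h.append_left p).kEquiv
  | refl _ => exact .refl _
  | symm _ _ _ ih => exact ih.symm
  | trans _ _ _ _ _ ih ih' => exact ih.trans ih'

theorem KEquiv.append_right (q : List ℕ) (h : KEquiv u v) : KEquiv (u ++ q) (v ++ q) := by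
  induction h with
  | rel _ _ h => exact (h.append_right q).kEquiv
  | refl _ => exact .refl _
  | symm _ _ _ ih => exact ih.symm
  | trans _ _ _ _ _ ih ih' => exact ih.trans ih'

theorem KStep.perm (h : KStep u v) : u.Perm v := by
  cases h with
  | k1 x y a b c => exact ((List.Perm.swap c a [b]).append_left x).append_right y
  | k2 x y a b c => exact (((List.Perm.swap c a []).cons b).append_left x).append_right y

theorem KEquiv.perm (h : KEquiv u v) : u.Perm v := by
  induction h with
  | rel _ _ h => exact h.perm
  | refl _ => exact .refl _
  | symm _ _ _ ih => exact ih.symm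
  | trans _ _ _ _ _ ih ih' => exact ih.trans ih'

theorem KEquiv.cons (x : ℕ) (h : KEquiv u v) : KEquiv (x :: u) (x :: v) := h.append_left [x]

theorem kEquiv_swap_left (hab : a ≤ b) (hbc : b < c) (w : List ℕ) :
    KEquiv (a :: c :: b :: w) (c :: a :: b :: w) :=
  (KStep.k1 [] w a b c hab hbc).kEquiv

theorem kEquiv_swap_right (hab : a < b) (hbc : b ≤ c) (w : List ℕ) :
    KEquiv (b :: a :: c :: w) (b :: c :: a :: w) :=
  (KStep.k2 [] w a b c hab hbc).kEquiv

end KnuthEquivalence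

section RowInsertion

theorem rowInsert_nil (x : ℕ) : rowInsert x [] = ([x], none) := rfl

theorem rowInsert_cons_of_lt (h : x < y) : rowInsert x (y :: r) = (x :: r, some y) := by
  rw [rowInsert, if_pos h]

theorem rowInsert_cons_of_le (h : y ≤ x) :
    rowInsert x (y :: r) = (y :: (rowInsert x r).1, (rowInsert x r).2) := by
  rw [rowInsert, if_neg h.not_gt]

theorem eq_or_mem_of_mem_rowInsert : y ∈ (rowInsert x r).1 → y = x ∨ y ∈ r := by
  induction r with grind [rowInsert]

theorem lt_of_rowInsert_eq_some : (rowInsert x r).2 = some y → x < y := by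
  induction r with grind [rowInsert]

theorem mem_of_rowInsert_eq_some : (rowInsert x r).2 = some y → y ∈ r := by
  induction r with grind [rowInsert]

theorem exists_rowInsert_eq_cons (x : ℕ) (r : List ℕ) :
    ∃ y r', (rowInsert x r).1 = y :: r' ∧ y ≤ x := by
  cases r with
  | nil => exact ⟨x, [], rfl, le_rfl⟩
  | cons a r =>
    rcases lt_or_ge x a with hxa | hax
    · exact ⟨x, r, by rw [rowInsert_cons_of_lt hxa], le_rfl⟩
    · exact ⟨a, (rowInsert x r).1, by rw [rowInsert_cons_of_le hax], hax⟩

theorem pairwise_rowInsert (x : ℕ) (hr : r.Pairwise (· ≤ ·)) :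
    (rowInsert x r).1.Pairwise (· ≤ ·) := by
  induction r with
  | nil => exact List.pairwise_singleton _ _
  | cons y r ih =>
    obtain ⟨hy, hr⟩ := List.pairwise_cons.1 hr
    rcases lt_or_ge x y with hxy | hyx
    · rw [rowInsert_cons_of_lt hxy]
      exact List.pairwise_cons.2 ⟨fun z hz => hxy.le.trans (hy z hz), hr⟩
    · rw [rowInsert_cons_of_le hyx]
      refine List.pairwise_cons.2 ⟨fun z hz => ?_, ih hr⟩
      rcases eq_or_mem_of_mem_rowInsert hz with rfl | hz
      exacts [hyx, hy z hz]

theorem exists_rowInsert_rowInsert_eq_some_of_lt (h : b < c) (r : List ℕ) :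
    ∃ y ≤ c, (rowInsert b (rowInsert c r).1).2 = some y := by
  induction r with
  | nil => exact ⟨c, le_rfl, by simp [rowInsert, h]⟩
  | cons a r ih => grind [rowInsert]

theorem exists_rowInsert_eq_some_of_le (h : b ≤ c) (hr : r.Pairwise (· ≤ ·))
    (hz : (rowInsert c (rowInsert b r).1).2 = some z) : ∃ y ≤ z, (rowInsert b r).2 = some y := by
  induction r with
  | nil => simp [rowInsert, h.not_gt] at hz
  | cons a r ih =>
    rcases lt_or_ge b a with hba | hab
    · rw [rowInsert_cons_of_lt hba] at hz ⊢
      rw [rowInsert_cons_of_le h] at hz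
      exact ⟨a, List.rel_of_pairwise_cons hr (mem_of_rowInsert_eq_some hz), rfl⟩
    · rw [rowInsert_cons_of_le hab] at hz ⊢
      rw [rowInsert_cons_of_le (hab.trans h)] at hz
      exact ih hr.tail hz

theorem kEquiv_cons_append_singleton_of_lt (h : x < y) (hr : (y :: r).Pairwise (· ≤ ·)) :
    KEquiv (y :: (r ++ [x])) (y :: x :: r) := by
  induction r generalizing y with
  | nil => exact .refl _
  | cons z r ih =>
    have hyz : y ≤ z := List.rel_of_pairwise_cons hr List.mem_cons_self
    exact ((ih (h.trans_le hyz) hr.tail).cons y).trans (kEquiv_swap_right h hyz r).symm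

theorem kEquiv_rowInsert (x : ℕ) (hr : r.Pairwise (· ≤ ·)) :
    KEquiv (r ++ [x]) ((rowInsert x r).2.toList ++ (rowInsert x r).1) := by
  induction r with
  | nil => exact .refl _
  | cons a r ih =>
    rcases lt_or_ge x a with hxa | hax
    · rw [rowInsert_cons_of_lt hxa]
      exact kEquiv_cons_append_singleton_of_lt hxa hr
    · rw [rowInsert_cons_of_le hax]
      refine ((ih hr.tail).cons a).trans ?_
      cases hy : (rowInsert x r).2 with
      | none => exact .refl _
      | some y =>
        obtain ⟨c, r', hc, hcx⟩ := exists_rowInsert_eq_cons x r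
        have hac : a ≤ c := by
          rcases eq_or_mem_of_mem_rowInsert (hc ▸ List.mem_cons_self) with rfl | hcr
          exacts [hax, List.rel_of_pairwise_cons hr hcr]
        rw [hc]
        exact kEquiv_swap_left hac (hcx.trans_lt (lt_of_rowInsert_eq_some hy)) r'

end RowInsertion

section RowInsertWord

/-- Successive row insertion of the letters of a word into a row: the resulting row, together with
the word of bumped entries in the order in which they are bumped. -/
def rowInsertWord : List ℕ → List ℕ → List ℕ × List ℕ
  | r, [] => (r, [])
  | r, x :: w =>
    let q := rowInsertWord (rowInsert x r).1 w
    (q.1, (rowInsert x r).2.toList ++ q.2)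

theorem rowInsertWord_append (r u v : List ℕ) :
    rowInsertWord r (u ++ v) = ((rowInsertWord (rowInsertWord r u).1 v).1,
      (rowInsertWord r u).2 ++ (rowInsertWord (rowInsertWord r u).1 v).2) := by
  induction u generalizing r with
  | nil => rfl
  | cons x u ih => simp only [List.cons_append, rowInsertWord, ih, List.append_assoc]

theorem rowInsertWord_cons_of_le (h : ∀ x ∈ w, y ≤ x) :
    rowInsertWord (y :: r) w = (y :: (rowInsertWord r w).1, (rowInsertWord r w).2) := by
  induction w generalizing r with
  | nil => rfl
  | cons x w ih =>
    obtain ⟨hx, hw⟩ := List.forall_mem_cons.1 h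
    simp only [rowInsertWord, rowInsert_cons_of_le hx, ih hw]

theorem rowInsertWord_cons_cons_of_lt (h : x < y) (hw : (x :: w).Pairwise (· ≤ ·)) :
    rowInsertWord (y :: r) (x :: w) =
      (x :: (rowInsertWord r w).1, y :: (rowInsertWord r w).2) := by
  rw [rowInsertWord, rowInsert_cons_of_lt h,
    rowInsertWord_cons_of_le fun _ => List.rel_of_pairwise_cons hw]
  rfl

theorem rowInsertWord_nil_of_pairwise (hw : w.Pairwise (· ≤ ·)) :
    rowInsertWord [] w = (w, []) := by
  induction w with
  | nil => rfl
  | cons x w ih =>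
    have hx : ∀ y ∈ w, x ≤ y := fun _ => List.rel_of_pairwise_cons hw
    simp only [rowInsertWord, rowInsert, rowInsertWord_cons_of_le hx, ih hw.tail,
      Option.toList_none, List.nil_append]

theorem pairwise_rowInsertWord (w : List ℕ) (hr : r.Pairwise (· ≤ ·)) :
    (rowInsertWord r w).1.Pairwise (· ≤ ·) := by
  induction w generalizing r with
  | nil => exact hr
  | cons x _ ih => exact ih (pairwise_rowInsert x hr)

theorem kEquiv_rowInsertWord (w : List ℕ) (hr : r.Pairwise (· ≤ ·)) :
    KEquiv (r ++ w) ((rowInsertWord r w).2 ++ (rowInsertWord r w).1) := by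
  induction w generalizing r with
  | nil => rw [List.append_nil]; exact .refl r
  | cons x w ih =>
    have hx := (kEquiv_rowInsert x hr).append_right w
    have hw := (ih (pairwise_rowInsert x hr)).append_left (rowInsert x r).2.toList
    simp only [List.append_assoc, List.singleton_append] at hx hw
    simpa only [rowInsertWord, List.append_assoc] using hx.trans hw

end RowInsertWord

section KnuthInvariance

/-- The words `u` and `v` have equivalent effects on the row `r`: inserting them results in the same
row and in Knuth-equivalent words of bumped entries. -/
def InsertEquiv (r u v : List ℕ) : Prop :=
  (rowInsertWord r u).1 = (rowInsertWord r v).1 ∧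
    KEquiv (rowInsertWord r u).2 (rowInsertWord r v).2

theorem InsertEquiv.cons (h : InsertEquiv r u v) (hu : ∀ x ∈ u, y ≤ x) (hv : ∀ x ∈ v, y ≤ x) :
    InsertEquiv (y :: r) u v := by
  rw [InsertEquiv, rowInsertWord_cons_of_le hu, rowInsertWord_cons_of_le hv]
  exact ⟨congrArg (y :: ·) h.1, h.2⟩

theorem InsertEquiv.append (h : ∀ s : List ℕ, s.Pairwise (· ≤ ·) → InsertEquiv s u v)
    (hr : r.Pairwise (· ≤ ·)) (p q : List ℕ) : InsertEquiv r (p ++ u ++ q) (p ++ v ++ q) := by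
  obtain ⟨hrow, hbumped⟩ := h _ (pairwise_rowInsertWord p hr)
  simp only [InsertEquiv, rowInsertWord_append, hrow, true_and]
  exact (hbumped.append_left _).append_right _

theorem insertEquiv_swap_left_of_lt (hay : a < y) (hab : a ≤ b) (hbc : b < c)
    (hr : (y :: r).Pairwise (· ≤ ·)) : InsertEquiv (y :: r) [a, c, b] [c, a, b] := by
  have hac : a < c := hab.trans_lt hbc
  rcases lt_or_ge c y with hcy | hyc
  · cases r with
    | nil =>
      simp only [InsertEquiv, rowInsertWord, rowInsert_nil, rowInsert_cons_of_lt hay,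
        rowInsert_cons_of_lt hcy, rowInsert_cons_of_lt hac, rowInsert_cons_of_lt hbc,
        rowInsert_cons_of_le hac.le, rowInsert_cons_of_le hab, true_and]
      exact .refl _
    | cons z r =>
      have hyz : y ≤ z := List.rel_of_pairwise_cons hr List.mem_cons_self
      have hcz : c < z := hcy.trans_le hyz
      have hbz : b < z := hbc.trans hcz
      simp only [InsertEquiv, rowInsertWord, rowInsert_cons_of_lt hay,
        rowInsert_cons_of_lt hcy, rowInsert_cons_of_lt hac, rowInsert_cons_of_lt hbc,
        rowInsert_cons_of_lt hcz, rowInsert_cons_of_lt hbz,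
        rowInsert_cons_of_le hac.le, rowInsert_cons_of_le hab, true_and]
      exact (kEquiv_swap_right hcy hyz []).symm
  · obtain ⟨p, hpc, hp⟩ := exists_rowInsert_rowInsert_eq_some_of_lt hbc r
    have hyp : y ≤ p := by
      rcases eq_or_mem_of_mem_rowInsert (mem_of_rowInsert_eq_some hp) with rfl | hpr
      exacts [hyc, List.rel_of_pairwise_cons hr hpr]
    simp only [InsertEquiv, rowInsertWord, rowInsert_cons_of_lt hay, rowInsert_cons_of_le hac.le,
      rowInsert_cons_of_le hab, rowInsert_cons_of_le hyc, hp, true_and]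
    cases ho : (rowInsert c r).2 with
    | none => exact .refl _
    | some o => exact kEquiv_swap_left hyp (hpc.trans_lt (lt_of_rowInsert_eq_some ho)) []

theorem insertEquiv_swap_left (hab : a ≤ b) (hbc : b < c) (hr : r.Pairwise (· ≤ ·)) :
    InsertEquiv r [a, c, b] [c, a, b] := by
  induction r with
  | nil =>
    have hac : a < c := hab.trans_lt hbc
    simp only [InsertEquiv, rowInsertWord, rowInsert_nil, rowInsert_cons_of_lt hac,
      rowInsert_cons_of_lt hbc, rowInsert_cons_of_le hac.le, rowInsert_cons_of_le hab, true_and]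
    exact .refl _
  | cons y r ih =>
    rcases lt_or_ge a y with hay | hya
    · exact insertEquiv_swap_left_of_lt hay hab hbc hr
    · exact (ih hr.tail).cons (by grind) (by grind)

theorem insertEquiv_swap_right_of_lt (hay : a < y) (hab : a < b) (hbc : b ≤ c)
    (hr : (y :: r).Pairwise (· ≤ ·)) : InsertEquiv (y :: r) [b, a, c] [b, c, a] := by
  have hac : a < c := hab.trans_le hbc
  rcases lt_or_ge b y with hby | hyb
  · simp only [InsertEquiv, rowInsertWord, rowInsert_cons_of_lt hby, rowInsert_cons_of_lt hab,
      rowInsert_cons_of_le hac.le, rowInsert_cons_of_le hbc, true_and]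
    cases ho : (rowInsert c r).2 with
    | none => exact .refl _
    | some o =>
      have hyo : y ≤ o := List.rel_of_pairwise_cons hr (mem_of_rowInsert_eq_some ho)
      exact kEquiv_swap_right hby hyo []
  · have hyc : y ≤ c := hyb.trans hbc
    simp only [InsertEquiv, rowInsertWord, rowInsert_cons_of_lt hay, rowInsert_cons_of_le hac.le,
      rowInsert_cons_of_le hyb, rowInsert_cons_of_le hyc, true_and]
    cases ho : (rowInsert c (rowInsert b r).1).2 with
    | none => exact .refl _
    | some o =>
      obtain ⟨p, hpo, hp⟩ := exists_rowInsert_eq_some_of_le hbc hr.of_cons ho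
      rw [hp]
      exact kEquiv_swap_right (hyb.trans_lt (lt_of_rowInsert_eq_some hp)) hpo []

theorem insertEquiv_swap_right (hab : a < b) (hbc : b ≤ c) (hr : r.Pairwise (· ≤ ·)) :
    InsertEquiv r [b, a, c] [b, c, a] := by
  induction r with
  | nil =>
    have hac : a < c := hab.trans_le hbc
    simp only [InsertEquiv, rowInsertWord, rowInsert_nil, rowInsert_cons_of_lt hab,
      rowInsert_cons_of_le hac.le, rowInsert_cons_of_le hbc, true_and]
    exact .refl _
  | cons y r ih =>
    rcases lt_or_ge a y with hay | hya
    · exact insertEquiv_swap_right_of_lt hay hab hbc hr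
    · exact (ih hr.tail).cons (by grind) (by grind)

theorem KEquiv.insertEquiv (h : KEquiv u v) (hr : r.Pairwise (· ≤ ·)) : InsertEquiv r u v := by
  induction h with
  | rel _ _ h =>
    cases h with
    | k1 x y a b c hab hbc => exact .append (fun _ => insertEquiv_swap_left hab hbc) hr x y
    | k2 x y a b c hab hbc => exact .append (fun _ => insertEquiv_swap_right hab hbc) hr x y
  | refl _ => exact ⟨rfl, .refl _⟩
  | symm _ _ _ ih => exact ⟨ih.1.symm, ih.2.symm⟩
  | trans _ _ _ _ _ ih ih' => exact ⟨ih.1.trans ih'.1, ih.2.trans ih'.2⟩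

end KnuthInvariance

section Rows

/-- The word of entries bumped out of the first row while `w` is inserted into the empty tableau.
Its insertion tableau is that of `w` with the first row removed. -/
def bumped (w : List ℕ) : List ℕ := (rowInsertWord [] w).2

theorem tInsert_cons (x : ℕ) (r : List ℕ) (T : List (List ℕ)) :
    tInsert x (r :: T) =
      (rowInsert x r).1 :: (rowInsert x r).2.toList.foldl (fun t x => tInsert x t) T := by
  rw [tInsert]
  rcases rowInsert x r with ⟨r', _ | y⟩ <;> rfl

theorem foldl_tInsert_cons (r : List ℕ) (T : List (List ℕ)) (w : List ℕ) :
    w.foldl (fun t x => tInsert x t) (r :: T) =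
      (rowInsertWord r w).1 :: (rowInsertWord r w).2.foldl (fun t x => tInsert x t) T := by
  induction w generalizing r T with
  | nil => rfl
  | cons x w ih => rw [List.foldl_cons, tInsert_cons, ih, rowInsertWord, List.foldl_append]

theorem P_cons (x : ℕ) (w : List ℕ) :
    P (x :: w) = (rowInsertWord [] (x :: w)).1 :: P (bumped (x :: w)) :=
  foldl_tInsert_cons [x] [] w

theorem row_zero (w : List ℕ) : row w 0 = (rowInsertWord [] w).1 := by
  cases w with
  | nil => rfl
  | cons x w => rw [row, P_cons, List.getD_cons_zero]

theorem row_succ (w : List ℕ) (i : ℕ) : row w (i + 1) = row (bumped w) i := by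
  cases w with
  | nil => rfl
  | cons x w => rw [row, P_cons, List.getD_cons_succ, row]

theorem pairwise_row_zero (w : List ℕ) : (row w 0).Pairwise (· ≤ ·) :=
  row_zero w ▸ pairwise_rowInsertWord w .nil

theorem row_zero_append (u v : List ℕ) : row (u ++ v) 0 = (rowInsertWord (row u 0) v).1 := by
  rw [row_zero, row_zero, rowInsertWord_append]

theorem bumped_append (u v : List ℕ) :
    bumped (u ++ v) = bumped u ++ (rowInsertWord (row u 0) v).2 := by
  rw [bumped, bumped, row_zero, rowInsertWord_append]

theorem kEquiv_bumped_append_row_zero (w : List ℕ) : KEquiv w (bumped w ++ row w 0) :=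
  row_zero w ▸ kEquiv_rowInsertWord w .nil

theorem KEquiv.row_zero_eq (h : KEquiv u v) : row u 0 = row v 0 := by
  rw [row_zero, row_zero, (h.insertEquiv .nil).1]

theorem KEquiv.bumped (h : KEquiv u v) : KEquiv (bumped u) (bumped v) := (h.insertEquiv .nil).2

theorem KEquiv.row_eq (h : KEquiv u v) (i : ℕ) : row u i = row v i := by
  induction i generalizing u v with
  | zero => exact h.row_zero_eq
  | succ i ih => rw [row_succ, row_succ, ih h.bumped]

theorem bumped_induction {motive : List ℕ → Prop} (nil : motive [])
    (step : ∀ w, motive (bumped w) → motive w) : ∀ w, motive w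
  | [] => nil
  | x :: w => step (x :: w) (bumped_induction nil step (bumped (x :: w)))
termination_by w => (P w).length
decreasing_by rw [P_cons]; exact Nat.lt_succ_self _

end Rows

section FitsAbove

/-- The row `r` can be placed directly above the row `s` in a semistandard tableau: it is at least
as long, and each entry of `s` is larger than the entry of `r` above it. -/
inductive FitsAbove : List ℕ → List ℕ → Prop
  | nil (r : List ℕ) : FitsAbove r []
  | cons {a b : ℕ} {r s : List ℕ} (hab : a < b) (h : FitsAbove r s) : FitsAbove (a :: r) (b :: s)

theorem FitsAbove.rowInsert_left (x : ℕ) (h : FitsAbove r s) :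
    FitsAbove (rowInsert x r).1 s := by
  induction h with
  | nil r => exact .nil _
  | @cons a b r s hab h ih =>
    rcases lt_or_ge x a with hxa | hax
    · exact rowInsert_cons_of_lt hxa ▸ .cons (hxa.trans hab) h
    · exact rowInsert_cons_of_le hax ▸ .cons hab ih

theorem FitsAbove.rowInsert_of_eq_some (h : FitsAbove r s) (hy : (rowInsert x r).2 = some y) :
    FitsAbove (rowInsert x r).1 (rowInsert y s).1 := by
  induction r generalizing s with
  | nil => simp [rowInsert_nil] at hy
  | cons a r ih =>
    rcases lt_or_ge x a with hxa | hax
    · rw [rowInsert_cons_of_lt hxa] at hy ⊢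
      obtain rfl : a = y := Option.some.inj hy
      cases h with
      | nil => exact .cons hxa (.nil r)
      | cons hab h => exact rowInsert_cons_of_lt hab ▸ .cons hxa h
    · rw [rowInsert_cons_of_le hax] at hy ⊢
      have hay : a < y := hax.trans_lt (lt_of_rowInsert_eq_some hy)
      cases h with
      | nil => exact .cons hay (.nil _)
      | @cons _ b _ s hab h =>
        rcases lt_or_ge y b with hyb | hby
        · exact rowInsert_cons_of_lt hyb ▸ .cons hay (h.rowInsert_left x)
        · exact rowInsert_cons_of_le hby ▸ .cons hab (ih h hy)

theorem FitsAbove.rowInsertWord_rowInsertWord (h : FitsAbove r s) (w : List ℕ) :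
    FitsAbove (rowInsertWord r w).1 (rowInsertWord s (rowInsertWord r w).2).1 := by
  induction w generalizing r s with
  | nil => exact h
  | cons x w ih =>
    rw [rowInsertWord, rowInsertWord_append]
    cases hy : (rowInsert x r).2 with
    | none => exact ih (h.rowInsert_left x)
    | some y => exact ih (h.rowInsert_of_eq_some hy)

theorem fitsAbove_row_zero_bumped (w : List ℕ) : FitsAbove (row w 0) (row (bumped w) 0) := by
  rw [row_zero, row_zero]
  exact (FitsAbove.nil []).rowInsertWord_rowInsertWord w

theorem FitsAbove.rowInsertWord_eq (h : FitsAbove r s) (hr : r.Pairwise (· ≤ ·)) :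
    rowInsertWord s r = (r, s) := by
  induction h with
  | nil r => exact rowInsertWord_nil_of_pairwise hr
  | cons hab _ ih => rw [rowInsertWord_cons_cons_of_lt hab hr, ih hr.of_cons]

theorem FitsAbove.row_zero_append_eq (h : FitsAbove v (row w 0)) (hv : v.Pairwise (· ≤ ·)) :
    row (w ++ v) 0 = v := by
  rw [row_zero_append, h.rowInsertWord_eq hv]

theorem FitsAbove.kEquiv_bumped_append (h : FitsAbove v (row w 0)) (hv : v.Pairwise (· ≤ ·)) :
    KEquiv (bumped (w ++ v)) w := by
  rw [bumped_append, h.rowInsertWord_eq hv]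
  exact (kEquiv_bumped_append_row_zero w).symm

end FitsAbove

section RisingEntry

/-- The row `s'` is the row `s` with one additional entry `t`. -/
inductive Adjoin (t : ℕ) : List ℕ → List ℕ → Prop
  | head (s : List ℕ) : Adjoin t s (t :: s)
  | cons (a : ℕ) {s s' : List ℕ} (h : Adjoin t s s') : Adjoin t (a :: s) (a :: s')

theorem Adjoin.count (h : Adjoin t s s') (b : ℕ) : s'.count b = s.count b + [t].count b := by
  induction h with
  | head s => rw [← List.singleton_append, List.count_append, add_comm]
  | @cons a s s' h ih =>
    rw [List.count_cons (l := s'), ih, List.count_cons (l := s), add_right_comm]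

theorem Adjoin.sublist (h : Adjoin t s s') : s.Sublist s' := by
  induction h with
  | head s => exact List.sublist_cons_self t s
  | cons a _ ih => exact ih.cons_cons a

/-- Inserting the row `r` into the row `s'` moves a single entry `z` of `s'` up into `r`, and what
remains of `s'` fits below `r` and above every row that fits below both `s` and `s'`. -/
def EntryRises (r s s' : List ℕ) : Prop :=
  ∃ z r' v, Adjoin z r r' ∧ Adjoin z v s' ∧ rowInsertWord s' r = (r', v) ∧ FitsAbove r v ∧
    ∀ p, FitsAbove s p → FitsAbove s' p → FitsAbove v p

theorem EntryRises.cons (h : EntryRises r s s') (hca : c < a) (hr : (c :: r).Pairwise (· ≤ ·))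
    (b : ℕ) : EntryRises (c :: r) (b :: s) (a :: s') := by
  obtain ⟨z, r', v, hzr, hzv, hins, hrv, hfit⟩ := h
  refine ⟨z, c :: r', a :: v, hzr.cons c, hzv.cons a, ?_, hrv.cons hca, ?_⟩
  · rw [rowInsertWord_cons_cons_of_lt hca hr, hins]
  · rintro _ (_ | ⟨-, hs⟩) (_ | ⟨had, hs'⟩)
    exacts [.nil _, .cons had (hfit _ hs hs')]

theorem rowInsertWord_cons_eq_or_entryRises (t : ℕ) (hr : r.Pairwise (· ≤ ·))
    (h : FitsAbove r s) : rowInsertWord (t :: s) r = (r, t :: s) ∨ EntryRises r s (t :: s) := by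
  induction r generalizing s t with
  | nil =>
    cases h
    exact .inr ⟨t, [t], [], .head [], .head [], rfl, .nil [], fun p h _ => h⟩
  | cons c r ih =>
    rcases lt_or_ge c t with hct | htc
    · cases h with
      | nil =>
        left
        rw [rowInsertWord_cons_cons_of_lt hct hr, rowInsertWord_nil_of_pairwise hr.of_cons]
      | @cons _ e _ s hce h =>
        refine (ih e hr.of_cons h).imp (fun heq => ?_) (·.cons hct hr e)
        rw [rowInsertWord_cons_cons_of_lt hct hr, heq]
    · have ht : ∀ x ∈ c :: r, t ≤ x :=
        List.forall_mem_cons.2 ⟨htc, fun x hx => htc.trans (List.rel_of_pairwise_cons hr hx)⟩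
      refine .inr ⟨t, t :: c :: r, s, .head _, .head s, ?_, h, fun p h _ => h⟩
      rw [rowInsertWord_cons_of_le ht, h.rowInsertWord_eq hr]

theorem Adjoin.rowInsertWord_eq_or_entryRises (hs : Adjoin t s s') (hr : r.Pairwise (· ≤ ·))
    (h : FitsAbove r s) : rowInsertWord s' r = (r, s') ∨ EntryRises r s s' := by
  induction hs generalizing r with
  | head s => exact rowInsertWord_cons_eq_or_entryRises t hr h
  | cons a _ ih =>
    cases h with
    | cons hca h =>
      refine (ih hr.of_cons h).imp (fun heq => ?_) (·.cons hca hr a)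
      rw [rowInsertWord_cons_cons_of_lt hca hr, heq]

end RisingEntry

section TopCount

/-- The number of entries `b` in the first `k` rows of the insertion tableau of `w`. -/
def topCount (b k : ℕ) (w : List ℕ) : ℕ := ∑ i ∈ Finset.range k, (row w i).count b

theorem topCount_zero (b : ℕ) (w : List ℕ) : topCount b 0 w = 0 := Finset.sum_range_zero _

theorem topCount_nil (b k : ℕ) : topCount b k [] = 0 :=
  Finset.sum_eq_zero fun _ _ => List.count_nil

theorem topCount_succ (b k : ℕ) (w : List ℕ) :
    topCount b (k + 1) w = topCount b k w + (row w k).count b :=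
  Finset.sum_range_succ _ k

theorem topCount_succ' (b k : ℕ) (w : List ℕ) :
    topCount b (k + 1) w = (row w 0).count b + topCount b k (bumped w) := by
  simp only [topCount, Finset.sum_range_succ', row_succ, add_comm]

theorem KEquiv.topCount_eq (h : KEquiv u v) (b k : ℕ) : topCount b k u = topCount b k v := by
  simp only [topCount, h.row_eq]

theorem topCount_append_le (b k : ℕ) (w u : List ℕ) :
    topCount b k (w ++ u) ≤ topCount b k w + u.count b := by
  induction k generalizing w u with
  | zero => simp only [topCount_zero, zero_le]
  | succ k ih =>
    have hcount := (kEquiv_rowInsertWord u (pairwise_row_zero w)).perm.count_eq b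
    have hle := ih (bumped w) (rowInsertWord (row w 0) u).2
    rw [topCount_succ', topCount_succ', row_zero_append, bumped_append]
    simp only [List.count_append] at hcount
    omega

/-- How the insertion tableau of `w` changes under left multiplication by a letter `x`: either the
first row stays the same, or it acquires a single entry `t` from below (possibly `x` itself) and the
old first row still fits above the new second one. Below the first row the top counts do not
decrease, except by the removal of `t`. -/
def LeftInsertion (x : ℕ) (w : List ℕ) : Prop :=
  (row (x :: w) 0 = row w 0 ∧
    ∀ b k, topCount b k (bumped w) ≤ topCount b k (bumped (x :: w))) ∨
  ∃ t, Adjoin t (row w 0) (row (x :: w) 0) ∧ FitsAbove (row w 0) (row (bumped (x :: w)) 0) ∧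
    ∀ b k, topCount b k (bumped w) ≤ topCount b k (bumped (x :: w)) + [t].count b

theorem LeftInsertion.topCount_le (h : LeftInsertion x w) (b k : ℕ) :
    topCount b k w ≤ topCount b k (x :: w) := by
  cases k with
  | zero => simp only [topCount_zero, le_refl]
  | succ k =>
    rw [topCount_succ', topCount_succ']
    rcases h with ⟨hrow, hle⟩ | ⟨t, ht, -, hle⟩
    · exact hrow ▸ Nat.add_le_add_left (hle b k) _
    · have := hle b k
      rw [ht.count b]
      omega

theorem kEquiv_cons_bumped_append_row_zero (x : ℕ) (w : List ℕ) :
    KEquiv (x :: w) ((x :: bumped w) ++ row w 0) :=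
  (kEquiv_bumped_append_row_zero w).cons x

theorem leftInsertion_of_rowInsertWord_eq
    (hle : ∀ b k, topCount b k (bumped w) ≤ topCount b k (x :: bumped w))
    (heq : rowInsertWord (row (x :: bumped w) 0) (row w 0) = (row w 0, row (x :: bumped w) 0)) :
    LeftInsertion x w := by
  have hK := kEquiv_cons_bumped_append_row_zero x w
  have hbumped : KEquiv (bumped (x :: w)) (x :: bumped w) := by
    refine hK.bumped.trans ?_
    rw [bumped_append, heq]
    exact (kEquiv_bumped_append_row_zero _).symm
  refine .inl ⟨by rw [hK.row_zero_eq, row_zero_append, heq], fun b k => ?_⟩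
  rw [hbumped.topCount_eq]
  exact hle b k

theorem leftInsertion_of_entryRises (ht : Adjoin t (row (bumped w) 0) (row (x :: bumped w) 0))
    (hfit : FitsAbove (row (bumped w) 0) (row (bumped (x :: bumped w)) 0))
    (hle : ∀ b k, topCount b k (bumped (bumped w)) ≤
      topCount b k (bumped (x :: bumped w)) + [t].count b)
    (h : EntryRises (row w 0) (row (bumped w) 0) (row (x :: bumped w) 0)) :
    LeftInsertion x w := by
  obtain ⟨z, r', v, hzr, hzv, hins, hrv, hsplice⟩ := h
  have hK := kEquiv_cons_bumped_append_row_zero x w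
  have hrow : row (x :: w) 0 = r' := by rw [hK.row_zero_eq, row_zero_append, hins]
  have hbumped : KEquiv (bumped (x :: w)) (bumped (x :: bumped w) ++ v) := by
    simpa only [bumped_append, hins] using hK.bumped
  have hv : v.Pairwise (· ≤ ·) := (pairwise_row_zero _).sublist hzv.sublist
  have hvfit : FitsAbove v (row (bumped (x :: bumped w)) 0) :=
    hsplice _ hfit (fitsAbove_row_zero_bumped _)
  have hrow' : row (bumped (x :: w)) 0 = v := by
    rw [hbumped.row_zero_eq, hvfit.row_zero_append_eq hv]
  have hbumped' : KEquiv (bumped (bumped (x :: w))) (bumped (x :: bumped w)) :=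
    hbumped.bumped.trans (hvfit.kEquiv_bumped_append hv)
  refine .inr ⟨z, hrow ▸ hzr, hrow' ▸ hrv, ?_⟩
  rintro b (_ | k)
  · simp only [topCount_zero, zero_le]
  · have hcount := (ht.count b).symm.trans (hzv.count b)
    have := hle b k
    rw [topCount_succ', topCount_succ', hrow', hbumped'.topCount_eq]
    omega

theorem leftInsertion (x : ℕ) (w : List ℕ) : LeftInsertion x w := by
  induction w using bumped_induction with
  | nil =>
    refine .inr ⟨x, .head [], .nil [], fun b k => ?_⟩
    exact (topCount_nil b k).trans_le (Nat.zero_le _)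
  | step w ih =>
    have hr := pairwise_row_zero w
    have hfit := fitsAbove_row_zero_bumped w
    have hmono := ih.topCount_le
    rcases ih with ⟨hrow, -⟩ | ⟨t, ht, hfit', hle⟩
    · exact leftInsertion_of_rowInsertWord_eq hmono (hrow ▸ hfit.rowInsertWord_eq hr)
    · rcases ht.rowInsertWord_eq_or_entryRises hr hfit with heq | hrises
      · exact leftInsertion_of_rowInsertWord_eq hmono heq
      · exact leftInsertion_of_entryRises ht hfit' hle hrises

theorem topCount_le_append_left (b k : ℕ) (u w : List ℕ) :
    topCount b k w ≤ topCount b k (u ++ w) := by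
  induction u with
  | nil => rfl
  | cons x u ih => exact ih.trans ((leftInsertion x (u ++ w)).topCount_le b k)

end TopCount

end Plactic

open Plactic in
theorem stmt_1 (u w : List ℕ) (hu : ∀ x ∈ u, 0 < x) (hw : ∀ x ∈ w, 0 < x)
    (hcent : w ∈ Cent u) (b : ℕ) (hb : 0 < b) (hbu : b ∉ u) (i : ℕ) :
    (row (w ++ u) i).count b = (row w i).count b ∧
    (row w i).count b = (row (u ++ w) i).count b := by
  have hcomm : KEquiv (u ++ w) (w ++ u) := hcent
  have htop (k : ℕ) : topCount b k (w ++ u) = topCount b k w := by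
    apply le_antisymm
    · simpa only [List.count_eq_zero_of_not_mem hbu, add_zero] using topCount_append_le b k w u
    · exact (topCount_le_append_left b k u w).trans_eq (hcomm.topCount_eq b k)
  have hcount : (row (w ++ u) i).count b = (row w i).count b := by
    have hsucc := htop (i + 1)
    rwa [topCount_succ, topCount_succ, htop i, Nat.add_left_cancel_iff] at hsucc
  exact ⟨hcount, by rw [hcomm.row_eq, hcount]⟩
end
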